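/- If Γ is a USLI complex on [n] and Γ′ is any shifted simplicial complex on [n] with the same f-vector as Γ, then Γ′ = Γ. In other words, a USLI complex is the unique shifted complex with its f-vector. -/

import Mathlib

/-- A simplicial complex on a subset of ℕ: a collection of finite sets closed under inclusion. -/
def IsComplex (Γ : Finset (Finset ℕ)) : Prop :=
  ∀ F ∈ Γ, ∀ G ⊆ F, G ∈ Γ

/-- Γ is shifted on vertex set [n]: replacing a vertex by a larger one stays in Γ. -/
def IsShifted (Γ : Finset (Finset ℕ)) (n : ℕ) : Prop :=
  ∀ F ∈ Γ, ∀ i ∈ F, ∀ j, i < j → j ≤ n → insert j (F.erase i) ∈ Γ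

/-- The facets (maximal faces) of Γ. -/
def facets (Γ : Finset (Finset ℕ)) : Finset (Finset ℕ) :=
  Γ.filter fun F => ∀ G ∈ Γ, F ⊆ G → F = G

/-- The antistar of a vertex. -/
def ast (Γ : Finset (Finset ℕ)) (v : ℕ) : Finset (Finset ℕ) :=
  Γ.filter fun F => v ∉ F

/-- The link of a vertex. -/
def lk (Γ : Finset (Finset ℕ)) (v : ℕ) : Finset (Finset ℕ) :=
  Γ.filter fun F => v ∉ F ∧ insert v F ∈ Γ

/-- The cone over Γ with apex v. -/
def cone (Γ : Finset (Finset ℕ)) (v : ℕ) : Finset (Finset ℕ) :=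
  Γ ∪ Γ.image (insert v)


/-- Monomials in the variables x_i (i ≥ 1) are modelled as multisets of variable indices;
`m ≤ m'` (multiset inclusion) is divisibility.  `monLexGT m m'` says m >_lex m' in the
lexicographic order on monomials of S (smaller variable indices are lex-larger). -/
def monLexGT (m m' : Multiset ℕ) : Prop :=
  List.Lex (· < ·) (m.sort (· ≤ ·)) (m'.sort (· ≤ ·))

/-- m >_grlex m' in the graded lexicographic order (lower degree monomials are larger). -/
def gradedLexGT (m m' : Multiset ℕ) : Prop :=
  Multiset.card m < Multiset.card m' ∨
    (Multiset.card m = Multiset.card m' ∧ monLexGT m m')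

/-- A set of monomials forms a monomial ideal iff it is upward closed under divisibility. -/
def IsMonIdeal (I : Set (Multiset ℕ)) : Prop :=
  ∀ m ∈ I, ∀ m' : Multiset ℕ, m ≤ m' → m' ∈ I

/-- The minimal generators of a monomial ideal: monomials of I not properly divisible by
a monomial of I. -/
def minGen (I : Set (Multiset ℕ)) : Set (Multiset ℕ) :=
  {m ∈ I | ∀ m' ∈ I, m' ≤ m → m' = m}

/-- The monomial ideal generated by a set of monomials. -/
def idealGen (G : Set (Multiset ℕ)) : Set (Multiset ℕ) :=
  {m | ∃ g ∈ G, g ≤ m}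

/-- A universal squarefree lexsegment ideal (USLI): a squarefree monomial ideal of
S = k[x_i : i ∈ ℕ], finitely generated in each degree, such that together with any
monomial it contains every lex-larger squarefree monomial of the same degree. -/
def IsUSLI (L : Set (Multiset ℕ)) : Prop :=
  IsMonIdeal L ∧
  (∀ m ∈ minGen L, m.Nodup ∧ ∀ x ∈ m, 1 ≤ x) ∧
  (∀ d : ℕ, {m ∈ minGen L | Multiset.card m = d}.Finite) ∧
  (∀ m ∈ L, ∀ m' : Multiset ℕ, m'.Nodup → (∀ x ∈ m', 1 ≤ x) →
    Multiset.card m' = Multiset.card m → monLexGT m' m → m' ∈ L)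

/-- A squarefree strongly stable monomial ideal: all minimal generators are squarefree
(in positive variables), and exchanging a variable of a minimal generator for a smaller
missing one stays in the ideal. -/
def IsSqStable (I : Set (Multiset ℕ)) : Prop :=
  IsMonIdeal I ∧
  (∀ m ∈ minGen I, m.Nodup ∧ ∀ x ∈ m, 1 ≤ x) ∧
  (∀ m ∈ minGen I, ∀ i j : ℕ, 1 ≤ i → i < j → j ∈ m → i ∉ m →
    (i ::ₘ m.erase j) ∈ I)

/-- The largest variable index dividing a monomial. -/
def maxVar (u : Multiset ℕ) : ℕ := u.toFinset.sup id

theorem exists_minGen (L : Set (Multiset ℕ)) (m : Multiset ℕ) (hm : m ∈ L) :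
    ∃ g ∈ minGen L, g ≤ m := by
  induction m using Multiset.strongInductionOn with
  | ih m ih =>
    by_cases h : ∀ m' ∈ L, m' ≤ m → m' = m
    · exact ⟨m, ⟨hm, h⟩, le_rfl⟩
    · push Not at h
      obtain ⟨m', h1, h2, h3⟩ := h
      obtain ⟨g, hg, hgm⟩ := ih m' (lt_of_le_of_ne h2 h3) h1
      exact ⟨g, hg, hgm.trans h2⟩

theorem no_inf_ext (L : Set (Multiset ℕ)) (hL : IsUSLI L) (W : Finset ℕ) (M : ℕ)
    (hM : ∀ x ∈ W, x ≤ M) (hW : W.val ∉ L) (h : ∀ k, M < k → (insert k W).val ∈ L) : False := by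
  obtain ⟨h1, h2, h3, -⟩ := hL
  have key : ∀ k, ∃ g, M < k → (g ∈ minGen L ∧ g ≤ (insert k W).val ∧ k ∈ g) := by
    intro k
    by_cases hk : M < k
    · obtain ⟨g, hg, hgm⟩ := exists_minGen L _ (h k hk)
      refine ⟨g, fun _ => ⟨hg, hgm, ?_⟩⟩
      by_contra hkg
      apply hW
      refine h1 g hg.1 _ ?_
      rw [Multiset.le_iff_subset (h2 g hg).1]
      intro x hx
      have := Multiset.mem_of_le hgm hx
      rw [Finset.mem_val, Finset.mem_insert] at this
      rcases this with rfl | this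
      · exact absurd hx hkg
      · exact this
    · exact ⟨0, fun h => absurd h hk⟩
  choose g hg using key
  have hfin : (⋃ d ∈ Set.Iic (W.card + 1), {m ∈ minGen L | Multiset.card m = d}).Finite :=
    Set.Finite.biUnion (Set.finite_Iic _) (fun d _ => h3 d)
  refine Set.infinite_of_injOn_mapsTo (f := g) (s := Set.Ioi M) ?_ ?_ (Set.Ioi_infinite M) hfin
  · intro k hk l hl hkl
    have hk' : k ∈ g l := hkl ▸ (hg k hk).2.2
    have := Multiset.mem_of_le (hg l hl).2.1 hk'
    rw [Finset.mem_val, Finset.mem_insert] at this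
    rcases this with h | h
    · exact h
    · have := hM k h
      have : M < k := hk
      omega
  · intro k hk
    simp only [Set.mem_iUnion]
    refine ⟨Multiset.card (g k), ?_, (hg k hk).1, rfl⟩
    have := Multiset.card_le_card (hg k hk).2.1
    exact this.trans (Finset.card_insert_le _ _)

theorem sort_union (A F : Finset ℕ) (h : ∀ x ∈ A, ∀ y ∈ F, x < y) :
    (A ∪ F).val.sort (· ≤ ·) = A.val.sort (· ≤ ·) ++ F.val.sort (· ≤ ·) := by
  have hd : Disjoint A F := by
    rw [Finset.disjoint_left]
    intro x hx hy
    exact lt_irrefl _ (h x hx x hy)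
  apply List.Perm.eq_of_pairwise (le := (· ≤ ·))
  · intro a b _ _ h1 h2
    exact le_antisymm h1 h2
  · exact Multiset.pairwise_sort _ _
  · rw [List.pairwise_append]
    refine ⟨Multiset.pairwise_sort _ _, Multiset.pairwise_sort _ _, ?_⟩
    intro a ha b hb
    exact (h a (by simpa using ha) b (by simpa using hb)).le
  · rw [← Multiset.coe_eq_coe, ← Multiset.coe_add, Multiset.sort_eq, Multiset.sort_eq,
      Multiset.sort_eq, ← Finset.disjUnion_eq_union A F hd]
    rfl

theorem lex_aux (A G F : Finset ℕ) (a : ℕ) (hA : ∀ x ∈ A, x ≤ a) (hG : ∀ x ∈ G, a + 1 < x)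
    (hF : ∀ x ∈ F, a + 1 < x) (hne : F.Nonempty) :
    monLexGT (insert (a + 1) A ∪ G).val (A ∪ F).val := by
  have e : insert (a + 1) A ∪ G = A ∪ ({a + 1} ∪ G) := by
    ext x; simp
  unfold monLexGT
  rw [e, sort_union A, sort_union A, sort_union {a + 1}]
  · apply List.Lex.append_left
    rcases hs : F.val.sort (· ≤ ·) with _ | ⟨f, l⟩
    · obtain ⟨x, hx⟩ := hne
      have : x ∈ F.val.sort (· ≤ ·) := by simpa using hx
      rw [hs] at this
      simp at this
    · have : f ∈ F.val.sort (· ≤ ·) := by rw [hs]; simp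
      have hf := hF f (by simpa using this)
      simp only [Finset.singleton_val, Multiset.sort_singleton, List.singleton_append]
      exact List.Lex.rel hf
  · intro x hx y hy
    rw [Finset.mem_singleton] at hx
    have := hG y hy
    omega
  · intro x hx y hy
    have := hF y hy
    have := hA x hx
    omega
  · intro x hx y hy
    have := hA x hx
    rw [Finset.mem_union, Finset.mem_singleton] at hy
    rcases hy with hy | hy
    · omega
    · have := hG y hy
      omega

theorem not_all (L : Set (Multiset ℕ)) (hL : IsUSLI L) (B : Finset ℕ) (b : ℕ)
    (hb : ∀ x ∈ B, x ≤ b) (hB : B.val ∉ L) (e : ℕ) :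
    ¬ ∀ G : Finset ℕ, (∀ x ∈ G, b < x) → G.card = e → (B ∪ G).val ∈ L := by
  induction e with
  | zero =>
    intro h
    have := h ∅ (by simp) rfl
    rw [Finset.union_empty] at this
    exact hB this
  | succ e ih =>
    intro h
    apply ih
    intro G hG hc
    by_contra hn
    refine no_inf_ext L hL (B ∪ G) (max b (G.sup id)) ?_ hn ?_
    · intro x hx
      rcases Finset.mem_union.1 hx with hx | hx
      · exact (hb x hx).trans (le_max_left _ _)
      · exact (Finset.le_sup (f := id) hx).trans (le_max_right _ _)
    · intro k hk
      rw [← Finset.union_insert]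
      have hk1 : b < k := lt_of_le_of_lt (le_max_left _ _) hk
      have hk2 : k ∉ G := fun hkG =>
        absurd ((Finset.le_sup (f := id) hkG).trans (le_max_right b _)) (not_le.2 hk)
      apply h
      · intro x hx
        rcases Finset.mem_insert.1 hx with rfl | hx
        · exact hk1
        · exact hG x hx
      · rw [Finset.card_insert_of_notMem hk2, hc]

theorem dichotomy_usli (L : Set (Multiset ℕ)) (hL : IsUSLI L) (A : Finset ℕ) (a : ℕ)
    (hA : A ⊆ Finset.Icc 1 a) (h1 : A.val ∉ L) (h2 : (insert (a + 1) A).val ∉ L)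
    (F : Finset ℕ) (hF : ∀ x ∈ F, a + 1 < x) : (A ∪ F).val ∉ L := by
  intro h
  have hA' : ∀ x ∈ A, x ≤ a := fun x hx => (Finset.mem_Icc.1 (hA hx)).2
  have hne : F.Nonempty := by
    rw [Finset.nonempty_iff_ne_empty]
    rintro rfl
    rw [Finset.union_empty] at h
    exact h1 h
  have hpos := hne.card_pos
  have hB : ∀ x ∈ insert (a + 1) A, x ≤ a + 1 := by
    intro x hx
    rcases Finset.mem_insert.1 hx with rfl | hx
    · exact le_rfl
    · have := hA' x hx
      omega
  refine not_all L hL (insert (a + 1) A) (a + 1) hB h2 (F.card - 1) ?_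
  intro G hG hc
  refine hL.2.2.2 _ h _ (Finset.nodup _) ?_ ?_ (lex_aux A G F a hA' hG hF hne)
  · intro x hx
    rw [Finset.mem_val, Finset.mem_union, Finset.mem_insert] at hx
    rcases hx with (hx | hx) | hx
    · omega
    · exact (Finset.mem_Icc.1 (hA hx)).1
    · have := hG x hx
      omega
  · change (insert (a + 1) A ∪ G).card = (A ∪ F).card
    have d1 : Disjoint (insert (a + 1) A) G := by
      rw [Finset.disjoint_left]
      intro x hx hy
      have := hB x hx
      have := hG x hy
      omega
    have d2 : Disjoint A F := by
      rw [Finset.disjoint_left]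
      intro x hx hy
      have := hA' x hx
      have := hF x hy
      omega
    have d3 : a + 1 ∉ A := fun h => by
      have := hA' _ h
      omega
    rw [Finset.card_union_of_disjoint d1, Finset.card_union_of_disjoint d2,
      Finset.card_insert_of_notMem d3]
    omega

/-- Number of `c`-subsets `F` of `(a, n]` with `A ∪ F ∈ Γ`. -/
def cnt (Γ : Finset (Finset ℕ)) (n : ℕ) (A : Finset ℕ) (a c : ℕ) : ℕ :=
  ((Finset.powersetCard c (Finset.Ioc a n)).filter fun F => A ∪ F ∈ Γ).card

theorem Ioc_insert_aux (a n : ℕ) (h : a < n) :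
    Finset.Ioc a n = insert (a + 1) (Finset.Ioc (a + 1) n) := by
  ext x
  simp only [Finset.mem_Ioc, Finset.mem_insert]
  omega

theorem cnt_zero (Γ : Finset (Finset ℕ)) (n : ℕ) (A : Finset ℕ) (a : ℕ) :
    cnt Γ n A a 0 = if A ∈ Γ then 1 else 0 := by
  unfold cnt
  rw [Finset.powersetCard_zero, Finset.filter_singleton, Finset.union_empty]
  split_ifs <;> rfl

theorem cnt_succ (Γ : Finset (Finset ℕ)) (n : ℕ) (A : Finset ℕ) (a c : ℕ) (h : a < n) :
    cnt Γ n A a (c + 1) = cnt Γ n A (a + 1) (c + 1) + cnt Γ n (insert (a + 1) A) (a + 1) c := by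
  have hn : a + 1 ∉ Finset.Ioc (a + 1) n := by simp
  unfold cnt
  rw [Ioc_insert_aux a n h, Finset.powersetCard_succ_insert hn, Finset.filter_union,
    Finset.card_union_of_disjoint, Finset.filter_image, Finset.card_image_of_injOn]
  · congr 2
    ext F
    rw [Finset.mem_filter, Finset.mem_filter, Finset.union_insert, Finset.insert_union]
  · intro F hF G hG hFG
    have hF' := (Finset.mem_powersetCard.1 (Finset.mem_filter.1 hF).1).1
    have hG' := (Finset.mem_powersetCard.1 (Finset.mem_filter.1 hG).1).1
    have := congrArg (fun S => Finset.erase S (a + 1)) hFG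
    simpa [Finset.erase_insert (fun h => hn (hF' h)),
      Finset.erase_insert (fun h => hn (hG' h))] using this
  · rw [Finset.disjoint_left]
    intro F hF hG
    have hF' := (Finset.mem_powersetCard.1 (Finset.mem_filter.1 hF).1).1
    obtain ⟨G, -, rfl⟩ := Finset.mem_image.1 (Finset.mem_filter.1 hG).1
    exact hn (hF' (Finset.mem_insert_self _ _))

theorem cnt_eq_zero (Γ : Finset (Finset ℕ)) (n : ℕ) (A : Finset ℕ) (a c : ℕ)
    (h : ∀ F ⊆ Finset.Ioc a n, A ∪ F ∉ Γ) : cnt Γ n A a c = 0 := by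
  unfold cnt
  rw [Finset.card_eq_zero, Finset.filter_eq_empty_iff]
  intro F hF
  exact h F (Finset.mem_powersetCard.1 hF).1

theorem cnt_full (Γ : Finset (Finset ℕ)) (n : ℕ) (A : Finset ℕ) (a c : ℕ)
    (h : ∀ F ⊆ Finset.Ioc a n, A ∪ F ∈ Γ) : cnt Γ n A a c = (n - a).choose c := by
  unfold cnt
  rw [Finset.filter_true_of_mem, Finset.card_powersetCard, Nat.card_Ioc]
  intro F hF
  exact h F (Finset.mem_powersetCard.1 hF).1

theorem main_ind (n : ℕ) (L : Set (Multiset ℕ)) (hL : IsUSLI L)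
    (Γ : Finset (Finset ℕ))
    (hΓL : ∀ F : Finset ℕ, F ⊆ Finset.Icc 1 n → (F ∈ Γ ↔ (F.val : Multiset ℕ) ∉ L))
    (Γ' : Finset (Finset ℕ)) (hcx' : IsComplex Γ') (hsh' : IsShifted Γ' n) (k : ℕ) :
    ∀ (a : ℕ) (A : Finset ℕ), a + k = n → A ⊆ Finset.Icc 1 a →
      (∀ c, cnt Γ' n A a c = cnt Γ n A a c) →
      ∀ F ⊆ Finset.Ioc a n, (A ∪ F ∈ Γ' ↔ A ∪ F ∈ Γ) := by
  have hcx : ∀ F ⊆ Finset.Icc 1 n, ∀ G ⊆ F, F ∈ Γ → G ∈ Γ := by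
    intro F hF G hG h
    rw [hΓL F hF] at h
    rw [hΓL G (hG.trans hF)]
    exact fun hG' => h (hL.1 _ hG' _ (Finset.val_le_iff.2 hG))
  have base : ∀ (a : ℕ) (A : Finset ℕ), (∀ c, cnt Γ' n A a c = cnt Γ n A a c) →
      (A ∈ Γ' ↔ A ∈ Γ) := by
    intro a A h
    have := h 0
    rw [cnt_zero, cnt_zero] at this
    split_ifs at this <;> tauto
  induction k with
  | zero =>
    intro a A ha hA h F hF
    have : F = ∅ := by
      rw [← Finset.subset_empty]
      refine hF.trans ?_
      rw [Finset.Ioc_eq_empty (by omega)]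
    subst this
    rw [Finset.union_empty]
    exact base a A h
  | succ k ih =>
    intro a A ha hA h
    have hb := base a A h
    have han : a < n := by omega
    have haA : a + 1 ∉ A := fun h => by
      have := (Finset.mem_Icc.1 (hA h)).2
      omega
    have hsub : ∀ F ⊆ Finset.Ioc a n, A ∪ F ⊆ Finset.Icc 1 n := by
      intro F hF x hx
      rcases Finset.mem_union.1 hx with hx | hx
      · have := Finset.mem_Icc.1 (hA hx)
        rw [Finset.mem_Icc]; omega
      · have := Finset.mem_Ioc.1 (hF hx)
        rw [Finset.mem_Icc]; omega
    by_cases hAΓ : A ∈ Γ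
    swap
    · intro F hF
      have e1 : A ∪ F ∉ Γ := fun h => hAΓ (hcx _ (hsub F hF) _ Finset.subset_union_left h)
      have e2 : A ∪ F ∉ Γ' := fun h => hAΓ (hb.1 (hcx' _ h _ Finset.subset_union_left))
      exact ⟨fun h => absurd h e2, fun h => absurd h e1⟩
    have hA1 : A ⊆ Finset.Icc 1 (a + 1) := hA.trans (Finset.Icc_subset_Icc_right (by omega))
    have hA2 : insert (a + 1) A ⊆ Finset.Icc 1 (a + 1) := by
      intro x hx
      rcases Finset.mem_insert.1 hx with rfl | hx
      · rw [Finset.mem_Icc]; omega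
      · exact hA1 hx
    have hA2n : insert (a + 1) A ⊆ Finset.Icc 1 n :=
      hA2.trans (Finset.Icc_subset_Icc_right (by omega))
    -- it suffices to treat the two branches
    have comb : (∀ F ⊆ Finset.Ioc (a + 1) n, (A ∪ F ∈ Γ' ↔ A ∪ F ∈ Γ)) →
        (∀ F ⊆ Finset.Ioc (a + 1) n,
          (insert (a + 1) A ∪ F ∈ Γ' ↔ insert (a + 1) A ∪ F ∈ Γ)) →
        ∀ F ⊆ Finset.Ioc a n, (A ∪ F ∈ Γ' ↔ A ∪ F ∈ Γ) := by
      intro h1 h2 F hF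
      rw [Ioc_insert_aux a n han] at hF
      by_cases hm : a + 1 ∈ F
      · have e : A ∪ F = insert (a + 1) A ∪ F.erase (a + 1) := by
          rw [Finset.insert_union, ← Finset.union_insert, Finset.insert_erase hm]
        rw [e]
        apply h2
        intro x hx
        rw [Finset.mem_erase] at hx
        exact (Finset.mem_insert.1 (hF hx.2)).resolve_left hx.1
      · apply h1
        intro x hx
        exact (Finset.mem_insert.1 (hF hx)).resolve_left (fun h => hm (h ▸ hx))
    by_cases hB : insert (a + 1) A ∈ Γ
    · -- second case: everything on the antistar is a face
      have full : ∀ F ⊆ Finset.Ioc (a + 1) n, A ∪ F ∈ Γ := by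
        intro F hF
        have hF' : F ⊆ Finset.Ioc a n := hF.trans (Finset.Ioc_subset_Ioc_left (by omega))
        rw [hΓL _ (hsub F hF')]
        rw [hΓL _ hA2n] at hB
        rw [hΓL A (by simpa using hsub ∅ (by simp))] at hAΓ
        exact dichotomy_usli L hL A a hA hAΓ hB F (fun x hx => (Finset.mem_Ioc.1 (hF hx)).1)
      have top : A ∪ Finset.Ioc (a + 1) n ∈ Γ' := by
        have hpos : 0 < cnt Γ' n A a k := by
          rw [h]
          unfold cnt
          rw [Finset.card_pos]
          refine ⟨Finset.Ioc (a + 1) n, Finset.mem_filter.2 ⟨Finset.mem_powersetCard.2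
            ⟨Finset.Ioc_subset_Ioc_left (by omega), ?_⟩, full _ (Finset.Subset.refl _)⟩⟩
          rw [Nat.card_Ioc]; omega
        unfold cnt at hpos
        obtain ⟨F, hF⟩ := Finset.card_pos.1 hpos
        obtain ⟨hF, hFΓ⟩ := Finset.mem_filter.1 hF
        obtain ⟨hF, hc⟩ := Finset.mem_powersetCard.1 hF
        by_cases hm : a + 1 ∈ F
        · have hcard : (Finset.Ioc a n \ F).card = 1 := by
            rw [Finset.card_sdiff_of_subset hF, Nat.card_Ioc]; omega
          obtain ⟨j, hj⟩ := Finset.card_eq_one.1 hcard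
          have hjm : j ∈ Finset.Ioc a n \ F := by rw [hj]; simp
          rw [Finset.mem_sdiff, Finset.mem_Ioc] at hjm
          have hja : j ≠ a + 1 := fun h => hjm.2 (h ▸ hm)
          have := hsh' _ hFΓ (a + 1) (Finset.mem_union_right _ hm) j (by omega) hjm.1.2
          refine hcx' _ this _ ?_
          intro x hx
          rw [Finset.mem_insert, Finset.mem_erase, Finset.mem_union]
          rcases Finset.mem_union.1 hx with hx | hx
          · exact Or.inr ⟨fun h => haA (h ▸ hx), Or.inl hx⟩
          · have hx' := Finset.mem_Ioc.1 hx
            by_cases hxF : x ∈ F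
            · exact Or.inr ⟨by omega, Or.inr hxF⟩
            · left
              have : x ∈ Finset.Ioc a n \ F := by
                rw [Finset.mem_sdiff, Finset.mem_Ioc]
                exact ⟨by omega, hxF⟩
              rw [hj] at this
              exact Finset.mem_singleton.1 this
        · have : F = Finset.Ioc (a + 1) n := by
            apply Finset.eq_of_subset_of_card_le
            · intro x hx
              rw [Ioc_insert_aux a n han] at hF
              exact (Finset.mem_insert.1 (hF hx)).resolve_left (fun h => hm (h ▸ hx))
            · rw [Nat.card_Ioc]; omega
          rwa [this] at hFΓ
      have full' : ∀ F ⊆ Finset.Ioc (a + 1) n, A ∪ F ∈ Γ' := fun F hF =>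
        hcx' _ top _ (Finset.union_subset_union_right hF)
      apply comb
      · intro F hF
        exact ⟨fun _ => full F hF, fun _ => full' F hF⟩
      · apply ih (a + 1) _ (by omega) hA2
        intro c
        have := h (c + 1)
        rw [cnt_succ _ _ _ _ _ han, cnt_succ _ _ _ _ _ han, cnt_full Γ _ _ _ _ full,
          cnt_full Γ' _ _ _ _ full'] at this
        omega
    · -- first case: the link is void
      have hB' : insert (a + 1) A ∉ Γ' := by
        intro hB'
        have e1 : cnt Γ' n A a 1 = n - a := by
          unfold cnt
          rw [Finset.filter_true_of_mem, Finset.card_powersetCard, Nat.card_Ioc, Nat.choose_one_right]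
          intro F hF
          obtain ⟨hF, hc⟩ := Finset.mem_powersetCard.1 hF
          obtain ⟨j, rfl⟩ := Finset.card_eq_one.1 hc
          have hj := Finset.mem_Ioc.1 (hF (Finset.mem_singleton_self j))
          rw [Finset.union_singleton]
          by_cases hja : j = a + 1
          · rw [hja]; exact hB'
          · have := hsh' _ hB' (a + 1) (Finset.mem_insert_self _ _) j (by omega) hj.2
            rwa [Finset.erase_insert haA] at this
        rw [h] at e1
        have e2 : (Finset.powersetCard 1 (Finset.Ioc a n)).card ≤ cnt Γ n A a 1 := by
          rw [e1, Finset.card_powersetCard, Nat.card_Ioc, Nat.choose_one_right]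
        unfold cnt at e2
        have e3 := Finset.eq_of_subset_of_card_le (Finset.filter_subset _ _) e2
        have e4 : {a + 1} ∈ Finset.powersetCard 1 (Finset.Ioc a n) := by
          rw [Finset.mem_powersetCard, Finset.singleton_subset_iff, Finset.mem_Ioc]
          exact ⟨by omega, rfl⟩
        rw [← e3, Finset.mem_filter, Finset.union_singleton] at e4
        exact hB e4.2
      have void : ∀ F ⊆ Finset.Ioc (a + 1) n, insert (a + 1) A ∪ F ∉ Γ := by
        intro F hF hm
        refine hB (hcx _ ?_ _ Finset.subset_union_left hm)
        apply Finset.union_subset hA2n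
        intro x hx
        have := Finset.mem_Ioc.1 (hF hx)
        rw [Finset.mem_Icc]; omega
      have void' : ∀ F ⊆ Finset.Ioc (a + 1) n, insert (a + 1) A ∪ F ∉ Γ' := by
        intro F hF hm
        exact hB' (hcx' _ hm _ Finset.subset_union_left)
      apply comb
      · apply ih (a + 1) _ (by omega) hA1
        intro c
        rcases c with _ | c
        · rw [cnt_zero, cnt_zero]
          simp only [hb]
        · have := h (c + 1)
          rw [cnt_succ _ _ _ _ _ han, cnt_succ _ _ _ _ _ han, cnt_eq_zero Γ _ _ _ _ void,
            cnt_eq_zero Γ' _ _ _ _ void'] at this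
          omega
      · intro F hF
        exact ⟨fun h => absurd h (void' F hF), fun h => absurd h (void F hF)⟩

theorem cnt_start (Γ : Finset (Finset ℕ)) (n c : ℕ) (hV : ∀ F ∈ Γ, F ⊆ Finset.Icc 1 n) :
    cnt Γ n ∅ 0 c = (Γ.filter fun F => F.card = c).card := by
  unfold cnt
  congr 1
  ext F
  rw [Finset.mem_filter, Finset.mem_filter, Finset.mem_powersetCard, Finset.empty_union]
  constructor
  · exact fun h => ⟨h.2, h.1.2⟩
  · exact fun h => ⟨⟨hV F h.1, h.2⟩, h.1⟩

/-- a USLI complex is the unique shifted complex with its f-vector: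
if Γ is a complex on [n] whose Stanley-Reisner ideal is a USLI L, and Γ' is a shifted
complex on [n] with the same f-vector, then Γ' = Γ. -/
theorem usli_complex_unique_in_f_class (n : ℕ) (L : Set (Multiset ℕ)) (hL : IsUSLI L)
    (Γ : Finset (Finset ℕ)) (hΓV : ∀ F ∈ Γ, F ⊆ Finset.Icc 1 n)
    (hΓL : ∀ F : Finset ℕ, F ⊆ Finset.Icc 1 n → (F ∈ Γ ↔ (F.val : Multiset ℕ) ∉ L))
    (Γ' : Finset (Finset ℕ)) (hcx' : IsComplex Γ')
    (hV' : ∀ F ∈ Γ', F ⊆ Finset.Icc 1 n) (hsh' : IsShifted Γ' n)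
    (hfv : ∀ c : ℕ, (Γ'.filter fun F => F.card = c).card = (Γ.filter fun F => F.card = c).card) :
    Γ' = Γ := by
  have key := main_ind n L hL Γ hΓL Γ' hcx' hsh' n 0 ∅ (by omega) (by simp)
    (fun c => by rw [cnt_start Γ' n c hV', cnt_start Γ n c hΓV]; exact hfv c)
  ext F
  by_cases hF : F ⊆ Finset.Icc 1 n
  · have := key F hF
    rwa [Finset.empty_union] at this
  · exact ⟨fun h => absurd (hV' F h) hF, fun h => absurd (hΓV F h) hF⟩
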